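/- arXiv:1204.0287 — 2 statements merged into one kernel-verified Lean document; each statement's English description precedes it below -/
import Mathlib

section
/- Let G be a finite connected bipartite simple graph that is thick (every vertex has degree at least 3), has diameter m for some integer m ≥ 2, and has girth 2m. Then m ∈ {2, 3, 4, 6, 8}. -/
open Finset

theorem fh_walk_unique {V : Type} (G : SimpleGraph V) {u v : V} (p q : G.Walk u v)
    (hp : p.IsPath) (hq : q.IsPath) (hl : p.length + q.length < G.girth) : p = q := by
  classical
  by_contra hne
  set S : Set (Sym2 V) := {e | e ∈ p.edges ++ q.edges} with hS
  set H : SimpleGraph V := SimpleGraph.fromEdgeSet S with hH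
  have hHG : H ≤ G := by
    rw [hH]
    intro a b hab
    rw [SimpleGraph.fromEdgeSet_adj] at hab
    have h1 := hab.1
    simp only [hS, Set.mem_ofPred_eq, List.mem_append] at h1
    rcases h1 with h1 | h1
    · exact p.edges_subset_edgeSet h1
    · exact q.edges_subset_edgeSet h1
  have hpe : ∀ e ∈ p.edges, e ∈ H.edgeSet := by
    intro e he
    rw [hH, SimpleGraph.edgeSet_fromEdgeSet]
    refine ⟨by simp [hS, he], G.not_isDiag_of_mem_edgeSet (p.edges_subset_edgeSet he)⟩
  have hqe : ∀ e ∈ q.edges, e ∈ H.edgeSet := by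
    intro e he
    rw [hH, SimpleGraph.edgeSet_fromEdgeSet]
    refine ⟨by simp [hS, he], G.not_isDiag_of_mem_edgeSet (q.edges_subset_edgeSet he)⟩
  have hnac : ¬ H.IsAcyclic := by
    intro hac
    have := hac.path_unique ⟨p.transfer H hpe, hp.transfer hpe⟩ ⟨q.transfer H hqe, hq.transfer hqe⟩
    have h2 := congrArg (fun z : H.Path u v => z.1.support) this
    simp only [SimpleGraph.Walk.support_transfer] at h2
    exact hne (SimpleGraph.Walk.ext_support h2)
  obtain ⟨a, c, hc, hg⟩ := SimpleGraph.exists_girth_eq_length.2 hnac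
  have h3 := SimpleGraph.girth_anti hHG hnac
  have h4 : c.length ≤ p.length + q.length := by
    have hsub : c.edges ⊆ p.edges ++ q.edges := by
      intro e he
      have := c.edges_subset_edgeSet he
      rw [hH, SimpleGraph.edgeSet_fromEdgeSet] at this
      exact this.1
    have := (hc.isCircuit.isTrail.edges_nodup.subperm hsub).length_le
    simpa using this
  omega

theorem fh_closer_unique {V : Type} (G : SimpleGraph V) (hconn : G.Connected) {m : ℕ}
    (hgirth : G.girth = 2 * m) {u v w w' : V} (hd : G.dist u v < m)
    (hw : G.Adj u w) (hw' : G.Adj u w') (h : G.dist w v + 1 = G.dist u v)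
    (h' : G.dist w' v + 1 = G.dist u v) : w = w' := by
  obtain ⟨p, hp⟩ := hconn.exists_walk_length_eq_dist w v
  obtain ⟨q, hq⟩ := hconn.exists_walk_length_eq_dist w' v
  have := fh_walk_unique G (.cons hw p) (.cons hw' q)
    (SimpleGraph.Walk.isPath_of_length_eq_dist _ (by simp; omega))
    (SimpleGraph.Walk.isPath_of_length_eq_dist _ (by simp; omega))
    (by simp; omega)
  have h2 := congrArg (fun z => z.snd) this
  simpa using h2

theorem fh_dist_step {V : Type} (G : SimpleGraph V) (hconn : G.Connected) (hbip : G.Colorable 2)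
    {u v w : V} (hw : G.Adj u w) :
    G.dist w v + 1 = G.dist u v ∨ G.dist w v = G.dist u v + 1 := by
  obtain ⟨c⟩ := hbip
  let c' : G.Coloring Bool := G.recolorOfEquiv finTwoEquiv c
  obtain ⟨p, hp⟩ := hconn.exists_walk_length_eq_dist u v
  obtain ⟨q, hq⟩ := hconn.exists_walk_length_eq_dist w v
  have h1 := c'.even_length_iff_congr p
  have h2 := c'.even_length_iff_congr q
  have h3 := c'.valid hw
  have h4 : G.dist u v ≤ 1 + G.dist w v := by
    have := hconn.dist_triangle (u := u) (v := w) (w := v)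
    rwa [SimpleGraph.dist_eq_one_iff_adj.2 hw] at this
  have h5 : G.dist w v ≤ 1 + G.dist u v := by
    have := hconn.dist_triangle (u := w) (v := u) (w := v)
    rwa [SimpleGraph.dist_eq_one_iff_adj.2 hw.symm] at this
  have h6 : G.dist u v ≠ G.dist w v := by
    intro h
    rw [hp, h] at h1
    rw [hq] at h2
    rw [h1] at h2
    revert h2 h3
    cases c' u <;> cases c' w <;> cases c' v <;> simp
  omega

theorem fh_exists_closer {V : Type} (G : SimpleGraph V) (hconn : G.Connected) 
    {u v : V} (h : u ≠ v) : ∃ w, G.Adj u w ∧ G.dist w v + 1 = G.dist u v := by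
  obtain ⟨p, hp⟩ := hconn.exists_walk_length_eq_dist u v
  cases p with
  | nil => exact absurd rfl h
  | @cons _ x _ hw p =>
    refine ⟨_, hw, ?_⟩
    have h1 := SimpleGraph.dist_le p
    simp at hp
    have := hconn.dist_triangle (u := u) (v := x) (w := v)
    rw [SimpleGraph.dist_eq_one_iff_adj.2 hw] at this
    omega

/-- Combinatorial data of a generalised polygon. -/
structure FHPoly {V : Type} [Fintype V] (G : SimpleGraph V) [DecidableRel G.Adj] (m : ℕ) : Prop where
  conn : G.Connected
  hm : 2 ≤ m
  thick : ∀ v : V, 3 ≤ G.degree v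
  step : ∀ {u v w : V}, G.Adj u w → G.dist w v + 1 = G.dist u v ∨ G.dist w v = G.dist u v + 1
  closer : ∀ {u v : V}, u ≠ v → ∃ w, G.Adj u w ∧ G.dist w v + 1 = G.dist u v
  uniq : ∀ {u v w w' : V}, G.dist u v < m → G.Adj u w → G.Adj u w' →
    G.dist w v + 1 = G.dist u v → G.dist w' v + 1 = G.dist u v → w = w'
  le : ∀ u v, G.dist u v ≤ m
  ex : ∃ u v, G.dist u v = m

namespace FHPoly
variable {V : Type} [Fintype V] {G : SimpleGraph V} [DecidableRel G.Adj] {m : ℕ}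

theorem farther (P : FHPoly G m) {u v : V} (h : G.dist u v < m) (w : V) : 
    ∃ y, G.Adj u y ∧ y ≠ w ∧ G.dist y v = G.dist u v + 1 := by
  classical
  by_contra hcon
  push Not at hcon
  have hsub : ((G.neighborFinset u).erase w).card ≤ 1 := by
    rw [Finset.card_le_one]
    intro a ha b hb
    simp only [Finset.mem_erase, SimpleGraph.mem_neighborFinset] at ha hb
    have h1 := (P.step (v := v) ha.2).resolve_right (hcon a ha.2 ha.1)
    have h2 := (P.step (v := v) hb.2).resolve_right (hcon b hb.2 hb.1)
    exact P.uniq h ha.2 hb.2 h1 h2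
  have h3 := P.thick u
  have h4 := Finset.pred_card_le_card_erase (a := w) (s := G.neighborFinset u)
  rw [SimpleGraph.card_neighborFinset_eq_degree] at h4
  omega

theorem deg_le (P : FHPoly G m) {u v : V} (h : G.dist u v = m) : G.degree u ≤ G.degree v := by
  classical
  have hm := P.hm
  have key : ∀ w, G.Adj u w → ∃ y, G.Adj v y ∧ G.dist y w + 2 = m := by
    intro w hw
    have h1 : G.dist w v + 1 = m := by
      have := P.le w v
      rcases P.step (v := v) hw with h2 | h2 <;> omega
    have hne : v ≠ w := by
      rintro rfl
      rw [SimpleGraph.dist_self] at h1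
      omega
    obtain ⟨y, hy, hy2⟩ := P.closer hne
    rw [SimpleGraph.dist_comm (u := v)] at hy2
    exact ⟨y, hy, by omega⟩
  choose! f hf1 hf2 using key
  rw [← SimpleGraph.card_neighborFinset_eq_degree, ← SimpleGraph.card_neighborFinset_eq_degree]
  apply Finset.card_le_card_of_injOn f
  · intro w hw
    simp at hw ⊢
    exact hf1 w hw
  · intro w hw w' hw' hww
    simp at hw hw'
    have e1 := hf2 w hw
    have e2 := hf2 w' hw'
    rw [SimpleGraph.dist_comm] at e1 e2
    rw [← hww] at e2
    have e3 : G.dist u (f w) + 1 = m := by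
      have := P.step (v := u) (hf1 w hw)
      rw [SimpleGraph.dist_comm (u := v), SimpleGraph.dist_comm (u := f w)] at this
      have := P.le u (f w)
      omega
    exact P.uniq (v := f w) (by omega) hw hw' (by omega) (by omega)

theorem deg_opp (P : FHPoly G m) {u v : V} (h : G.dist u v = m) : G.degree u = G.degree v :=
  le_antisymm (P.deg_le h) (P.deg_le (by rwa [SimpleGraph.dist_comm]))

theorem extend (P : FHPoly G m) {w x : V} (h : G.Adj w x) (j : ℕ) (hj : j + 1 ≤ m) :
    ∃ y, G.dist y w = j + 1 ∧ G.dist y x = j := by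
  induction j with
  | zero => exact ⟨x, SimpleGraph.dist_eq_one_iff_adj.2 h.symm, by simp⟩
  | succ j ih =>
    obtain ⟨y, h1, h2⟩ := ih (by omega)
    obtain ⟨z, hz, -, hz2⟩ := P.farther (u := y) (v := w) (by omega) y
    refine ⟨z, by omega, ?_⟩
    have := P.step (v := x) hz
    have h3 := P.step (v := z) h
    rw [SimpleGraph.dist_comm (u := w), SimpleGraph.dist_comm (u := x)] at h3
    omega

theorem deg_two (P : FHPoly G m) {v w v' : V} (h : G.Adj w v) (h' : G.Adj w v') :
    G.degree v = G.degree v' := by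
  classical
  have hm := P.hm
  have h3 := P.thick w
  obtain ⟨x, hx⟩ : (((G.neighborFinset w).erase v).erase v').Nonempty := by
    rw [← Finset.card_pos]
    have h4 := Finset.pred_card_le_card_erase (a := v) (s := G.neighborFinset w)
    have h5 := Finset.pred_card_le_card_erase (a := v') (s := (G.neighborFinset w).erase v)
    rw [SimpleGraph.card_neighborFinset_eq_degree] at h4
    omega
  simp only [Finset.mem_erase, SimpleGraph.mem_neighborFinset] at hx
  obtain ⟨hx1, hx2, hx3⟩ := hx
  obtain ⟨z, hz1, hz2⟩ := P.extend hx3 (m - 2) (by omega)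
  rw [SimpleGraph.dist_comm] at hz1 hz2
  have key : ∀ a, G.Adj w a → x ≠ a → G.dist a z = m := by
    intro a ha hne
    rcases P.step (v := z) ha with h | h
    · exact absurd (P.uniq (by omega) hx3 ha (by omega) h) hne
    · omega
  rw [P.deg_opp (key v h hx2), P.deg_opp (key v' h' hx1)]

theorem exists_params (P : FHPoly G m) : ∃ s t : ℕ, 2 ≤ s ∧ 2 ≤ t ∧ ∀ a b, G.Adj a b →
    (G.degree a = s + 1 ∧ G.degree b = t + 1) ∨ (G.degree a = t + 1 ∧ G.degree b = s + 1) := by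
  obtain ⟨a0, -⟩ := P.ex
  have h0 := P.thick a0
  obtain ⟨b0, hb0⟩ : (G.neighborFinset a0).Nonempty := by
    rw [← Finset.card_pos, SimpleGraph.card_neighborFinset_eq_degree]
    omega
  rw [SimpleGraph.mem_neighborFinset] at hb0
  have h1 := P.thick b0
  refine ⟨G.degree a0 - 1, G.degree b0 - 1, by omega, by omega, ?_⟩
  have e1 : G.degree a0 - 1 + 1 = G.degree a0 := by omega
  have e2 : G.degree b0 - 1 + 1 = G.degree b0 := by omega
  rw [e1, e2]
  intro a
  obtain ⟨p⟩ := P.conn.preconnected a a0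
  have key : ∀ x y (p : G.Walk x y), y = a0 → ∀ b, G.Adj x b → 
      (G.degree x = G.degree a0 ∧ G.degree b = G.degree b0) ∨ 
      (G.degree x = G.degree b0 ∧ G.degree b = G.degree a0) := by
    intro x y p
    induction p with
    | nil => 
      rintro rfl b hb
      exact Or.inl ⟨rfl, P.deg_two hb hb0⟩
    | @cons u v w h p ih =>
      intro hw b hb
      have h1 := ih hw u h.symm
      have h2 := P.deg_two hb h
      omega
  exact key a a0 p rfl

theorem odd_regular (P : FHPoly G m) (hodd : Odd m) : ∃ s : ℕ, 2 ≤ s ∧ ∀ a, G.degree a = s + 1 := by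
  obtain ⟨s, t, hs, ht, hst⟩ := P.exists_params
  have key : ∀ x y (p : G.Walk x y), (Even p.length → G.degree x = G.degree y) ∧ 
      (¬ Even p.length → G.degree x + G.degree y = s + t + 2) := by
    intro x y p
    induction p with
    | nil => simp
    | @cons u v w h p ih =>
      have h1 := hst _ _ h
      simp only [SimpleGraph.Walk.length_cons, Nat.even_add_one]
      constructor
      · intro h2
        have := ih.2 h2
        omega
      · intro h2
        have := ih.1 (not_not.1 h2)
        omega
  have hadj : ∀ a : V, ∃ b, G.Adj a b := by
    intro a
    have h0 := P.thick a
    obtain ⟨b0, hb0⟩ : (G.neighborFinset a).Nonempty := by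
      rw [← Finset.card_pos, SimpleGraph.card_neighborFinset_eq_degree]
      omega
    rw [SimpleGraph.mem_neighborFinset] at hb0
    exact ⟨b0, hb0⟩
  obtain ⟨u, v, huv⟩ := P.ex
  obtain ⟨p, hp⟩ := P.conn.exists_walk_length_eq_dist u v
  have h1 := (key u v p).2 (by rw [hp, huv]; simpa using hodd)
  have h2 := P.deg_opp huv
  obtain ⟨b, hb⟩ := hadj u
  have h3 := hst _ _ hb
  refine ⟨s, hs, fun a => ?_⟩
  obtain ⟨b, hb⟩ := hadj a
  have h3 := hst _ _ hb
  omega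

end FHPoly
open Polynomial in
/-- Orthogonal polynomials attached to the tridiagonal recursion. -/
noncomputable def fhP (Q : ℝ) : ℕ → ℝ[X]
  | 0 => 1
  | 1 => X - 1
  | (n + 2) => X * fhP Q (n + 1) - C Q * fhP Q n

theorem fh_idem {V : Type} [Fintype V] [DecidableEq V] (Z : Matrix V V ℝ) (h : Z * Z = Z) :
    ∃ k : ℕ, Z.trace = k := by
  have h2 : IsIdempotentElem (Matrix.toLin' Z) := by
    unfold IsIdempotentElem
    rw [Module.End.mul_eq_comp, ← Matrix.toLin'_mul, h]
  have h3 := (LinearMap.isProj_range_iff_isIdempotentElem _).2 h2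
  exact ⟨_, by rw [← Matrix.trace_toLin'_eq, h3.trace]⟩

theorem fh_trace {V : Type} [Fintype V] [DecidableEq V] (X L : Matrix V V ℝ)
    (C : ℕ → Matrix V V ℝ) (n : ℕ) (hn : 1 ≤ n) (Q c τ y : ℝ) (hQ : Q ≠ 0)
    (h0 : X * C 0 = C 1 + C 0)
    (hi : ∀ i, i + 1 < n → X * C (i + 1) = C (i + 2) + Q • C i)
    (hC : C n = Q • C (n - 1))
    (hL : L * C 0 = X + c • 1) (hLX : Commute X L)
    (ht0 : (L * C 0).trace = τ) (ht : ∀ i, 1 ≤ i → i < n → (L * C i).trace = 0)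
    (hτ : τ ≠ 0)
    (hy : (fhP Q n).eval y = Q * (fhP Q (n - 1)).eval y) :
    ∃ k : ℕ, τ = k * ((∑ i ∈ range n, (fhP Q i).eval y ^ 2 / Q ^ i) * (y + c)) := by
  have hCi : ∀ i, i < n → Polynomial.aeval X (fhP Q i) * C 0 = C i ∧
      Polynomial.aeval X (fhP Q (i + 1)) * C 0 = C (i + 1) := by
    intro i
    induction i with
    | zero =>
      intro _
      refine ⟨by simp [fhP], ?_⟩
      simp [fhP, sub_mul, h0]
    | succ i ih =>
      intro h
      obtain ⟨i1, i2⟩ := ih (by omega)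
      refine ⟨i2, ?_⟩
      simp only [fhP, map_sub, map_mul, Polynomial.aeval_X, Polynomial.aeval_C, sub_mul, mul_assoc,
        i1, i2, hi i h, Algebra.algebraMap_eq_smul_one, smul_mul_assoc, one_mul]
      abel
  set p : ℕ → ℝ := fun i => (fhP Q i).eval y with hp
  have p0 : p 0 = 1 := by simp [hp, fhP]
  have p1 : p 1 = y - 1 := by simp [hp, fhP]
  have p2 : ∀ i, p (i + 2) = y * p (i + 1) - Q * p i := by intro i; simp [hp, fhP]
  have tel : ∀ k, k + 1 ≤ n → X * (∑ i ∈ range (k + 1), (p i / Q ^ i) • C i)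
      = y • (∑ i ∈ range (k + 1), (p i / Q ^ i) • C i)
        + (p k / Q ^ k) • C (k + 1) - (p (k + 1) / Q ^ k) • C k := by
    intro k
    induction k with
    | zero =>
      intro _
      simp [p0, p1, h0]
      module
    | succ k ih =>
      intro hk
      rw [Finset.sum_range_succ, mul_add, ih (by omega), mul_smul_comm, hi k (by omega), p2]
      match_scalars <;> field_simp <;> ring
  set W := ∑ i ∈ range n, (p i / Q ^ i) • C i with hW
  have hXW : X * W = y • W := by
    have := tel (n - 1) (by omega)
    rw [Nat.sub_add_cancel hn, hC] at this
    rw [hW, this]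
    have hy' : p n = Q * p (n - 1) := hy
    rw [hy']
    match_scalars <;> field_simp <;> ring
  set K : Polynomial ℝ := ∑ i ∈ range n, Polynomial.C (p i / Q ^ i) * fhP Q i with hK
  have hKW : Polynomial.aeval X K * C 0 = W := by
    rw [hK, hW, map_sum, Finset.sum_mul]
    refine Finset.sum_congr rfl fun i hi' => ?_
    rw [map_mul, Polynomial.aeval_C, mul_assoc, (hCi i (Finset.mem_range.1 hi')).1,
      Algebra.algebraMap_eq_smul_one, smul_mul_assoc, one_mul]
  have hcomm : ∀ f : Polynomial ℝ, Commute (Polynomial.aeval X f) L := by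
    intro f
    induction f using Polynomial.induction_on' with
    | add p q h1 h2 => rw [map_add]; exact h1.add_left h2
    | monomial k a =>
      rw [Polynomial.aeval_monomial]
      exact Commute.mul_left (Algebra.commutes a L) (hLX.pow_left k)
  set g : Polynomial ℝ := K * (Polynomial.X + Polynomial.C c) with hg
  set Z := L * W with hZ
  have hgZ : Polynomial.aeval X g = Z := by
    rw [hZ, ← hKW, ← mul_assoc, ← (hcomm K).eq, mul_assoc, hL, hg, map_mul]
    simp [Algebra.algebraMap_eq_smul_one]
  have hXZ : X * Z = y • Z := by
    rw [hZ, ← mul_assoc, hLX.eq, mul_assoc, hXW, mul_smul_comm]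
  have hev : ∀ f : Polynomial ℝ, Polynomial.aeval X f * Z = f.eval y • Z := by
    intro f
    induction f using Polynomial.induction_on with
    | C a => simp [Algebra.algebraMap_eq_smul_one]
    | add p q h1 h2 => simp [add_mul, h1, h2, add_smul]
    | monomial k a h =>
      have e : Polynomial.C a * Polynomial.X ^ (k + 1)
          = (Polynomial.C a * Polynomial.X ^ k) * Polynomial.X := by ring
      rw [e, map_mul, Matrix.mul_assoc _ _ Z, Polynomial.aeval_X, hXZ, mul_smul_comm, h,
        smul_smul, Polynomial.eval_mul (p := Polynomial.C a * Polynomial.X ^ k), Polynomial.eval_X,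
        mul_comm]
  set γ := g.eval y with hγ
  have hγ' : γ = (∑ i ∈ range n, (fhP Q i).eval y ^ 2 / Q ^ i) * (y + c) := by
    rw [hγ, hg, hK, Polynomial.eval_mul, Polynomial.eval_finsetSum]
    simp [hp]
    left
    refine Finset.sum_congr rfl fun i _ => ?_
    ring
  have hZZ : Z * Z = γ • Z := by
    conv_lhs => rw [← hgZ]
    rw [hgZ, ← hev g, hgZ]
  have htr : Z.trace = τ := by
    rw [hZ, hW, Finset.mul_sum, Matrix.trace_sum, Finset.sum_eq_single 0]
    · simp [p0, ht0]
    · intro i hi1 hi2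
      rw [mul_smul_comm, Matrix.trace_smul, ht i (by omega) (Finset.mem_range.1 hi1), smul_zero]
    · intro h; simp at h; omega
  rw [← hγ']
  have hγ0 : γ ≠ 0 := by
    intro h
    rw [h, zero_smul] at hZZ
    have := (Matrix.isNilpotent_trace_of_isNilpotent (M := Z) ⟨2, by rw [pow_two, hZZ]⟩).eq_zero
    exact hτ (htr.symm.trans this)
  obtain ⟨k, hk⟩ := fh_idem (γ⁻¹ • Z) (by
    rw [smul_mul_smul_comm, hZZ, smul_smul]
    congr 1
    field_simp)
  refine ⟨k, ?_⟩
  rw [Matrix.trace_smul, htr, smul_eq_mul] at hk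
  rw [← hk]
  field_simp
theorem fh_eval (r θ : ℝ) (i : ℕ) :
    (fhP (r ^ 2) i).eval (2 * r * Real.cos θ) * (r * Real.sin θ)
      = r ^ i * (r * Real.sin ((i + 1) * θ) - Real.sin (i * θ)) := by
  induction i using Nat.twoStepInduction with
  | zero => simp [fhP]
  | one =>
    simp only [fhP, Polynomial.eval_sub, Polynomial.eval_X, Polynomial.eval_one]
    have : ((1 : ℕ) + 1 : ℝ) * θ = 2 * θ := by push_cast; ring
    rw [this, Real.sin_two_mul]
    simp
    ring
  | more i h1 h2 =>
    simp only [fhP, Polynomial.eval_sub, Polynomial.eval_X, Polynomial.eval_mul, Polynomial.eval_C,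
      sub_mul]
    rw [mul_assoc, mul_assoc (r ^ 2), h1, h2]
    have e1 : ((i + 2 : ℕ) + 1 : ℝ) * θ = (i + 2) * θ + θ := by push_cast; ring
    have e2 : ((i + 2 : ℕ) : ℝ) * θ = (i + 2) * θ := by push_cast; ring
    have e3 : ((i + 1 : ℕ) + 1 : ℝ) * θ = (i + 2) * θ := by push_cast; ring
    have e4 : ((i + 1 : ℕ) : ℝ) * θ = (i + 2) * θ - θ := by push_cast; ring
    have e5 : (i : ℝ) * θ = ((i + 2) * θ - θ) - θ := by ring
    have e6 : ((i : ℝ) + 1) * θ = (i + 2) * θ - θ := by ring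
    rw [e1, e2, e3, e4, e5, e6]
    have f0 : ∀ x : ℝ, Real.sin (x + θ) = 2 * Real.cos θ * Real.sin x - Real.sin (x - θ) := by
      intro x
      rw [Real.sin_add, Real.sin_sub]; ring
    have f1 := f0 ((i + 2) * θ)
    have f2 := f0 ((i + 2) * θ - θ)
    rw [sub_add_cancel] at f2
    rw [f1]
    linear_combination (r ^ (i + 2)) * f2

theorem fh_sum1 (θ : ℝ) (n : ℕ) :
    (∑ i ∈ range (n + 1), Real.sin (i * θ) ^ 2) * (2 * Real.sin θ)
      = (n + 1) * Real.sin θ - Real.sin ((n + 1) * θ) * Real.cos (n * θ) := by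
  induction n with
  | zero => simp
  | succ n ih =>
    rw [Finset.sum_range_succ, add_mul, ih]
    have e1 : ((n + 1 : ℕ) + 1 : ℝ) * θ = (n + 1) * θ + θ := by push_cast; ring
    have e2 : (n : ℝ) * θ = (n + 1) * θ - θ := by ring
    rw [e1, e2, Real.sin_add, Real.cos_sub]
    push_cast
    have := Real.sin_sq_add_cos_sq ((n + 1) * θ)
    linear_combination Real.sin θ * this

theorem fh_sum2 (θ : ℝ) (n : ℕ) :
    (∑ i ∈ range n, Real.sin ((i + 1) * θ) * Real.sin (i * θ)) * (2 * Real.sin θ)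
      = n * Real.sin θ * Real.cos θ - Real.sin (n * θ) * Real.cos (n * θ) := by
  induction n with
  | zero => simp
  | succ n ih =>
    rw [Finset.sum_range_succ, add_mul, ih]
    push_cast
    have e1 : ((n : ℝ) + 1) * θ = n * θ + θ := by ring
    rw [e1, Real.sin_add, Real.cos_add]
    have h1 := Real.sin_sq_add_cos_sq (n * θ)
    have h2 := Real.sin_sq_add_cos_sq θ
    grind

theorem fh_norm (r θ : ℝ) (hr : 0 < r) (hs : Real.sin θ ≠ 0) (n : ℕ) (hn : 1 ≤ n)
    (hnθ : Real.sin (n * θ) = 0) :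
    (∑ i ∈ range n, (fhP (r ^ 2) i).eval (2 * r * Real.cos θ) ^ 2 / (r ^ 2) ^ i)
      * (4 * r ^ 2 - (2 * r * Real.cos θ) ^ 2) = 2 * n * (r ^ 2 + 1 - 2 * r * Real.cos θ) := by
  have h1 : (∑ i ∈ range n, (fhP (r ^ 2) i).eval (2 * r * Real.cos θ) ^ 2 / (r ^ 2) ^ i)
      * (r * Real.sin θ) ^ 2
      = ∑ i ∈ range n, (r * Real.sin ((i + 1) * θ) - Real.sin (i * θ)) ^ 2 := by
    rw [Finset.sum_mul]
    refine Finset.sum_congr rfl fun i _ => ?_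
    rw [div_mul_eq_mul_div, ← mul_pow, fh_eval, mul_pow]
    field_simp
    ring
  obtain ⟨k, rfl⟩ : ∃ k, n = k + 1 := ⟨n - 1, by omega⟩
  have s1 := fh_sum1 θ k
  have s2 := fh_sum2 θ (k + 1)
  rw [hnθ] at s2
  push_cast at hnθ s2
  rw [hnθ] at s1
  have s3 : ∑ i ∈ range (k + 1), Real.sin ((i + 1) * θ) ^ 2
      = ∑ i ∈ range (k + 1), Real.sin (i * θ) ^ 2 := by
    have a1 := Finset.sum_range_succ (fun i : ℕ => Real.sin (i * θ) ^ 2) (k + 1)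
    have a2 := Finset.sum_range_succ' (fun i : ℕ => Real.sin (i * θ) ^ 2) (k + 1)
    push_cast at a1 a2
    rw [hnθ] at a1
    simp at a2
    linarith
  have h2 : ∑ i ∈ range (k + 1), (r * Real.sin ((i + 1) * θ) - Real.sin (i * θ)) ^ 2
      = r ^ 2 * (∑ i ∈ range (k + 1), Real.sin ((i + 1) * θ) ^ 2)
        - 2 * r * (∑ i ∈ range (k + 1), Real.sin ((i + 1) * θ) * Real.sin (i * θ))
        + ∑ i ∈ range (k + 1), Real.sin (i * θ) ^ 2 := by
    rw [Finset.mul_sum, Finset.mul_sum, ← Finset.sum_sub_distrib, ← Finset.sum_add_distrib]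
    refine Finset.sum_congr rfl fun i _ => ?_
    ring
  rw [s3] at h2
  set S1 := ∑ i ∈ range (k + 1), Real.sin (i * θ) ^ 2
  set S2 := ∑ i ∈ range (k + 1), Real.sin ((i + 1) * θ) * Real.sin (i * θ)
  have t1 : S1 = (k + 1) / 2 := by
    have : Real.sin θ * (S1 - (k + 1) / 2) = 0 := by linear_combination s1 / 2
    have := (mul_eq_zero.1 this).resolve_left hs
    linarith
  have t2 : S2 = (k + 1) / 2 * Real.cos θ := by
    have : Real.sin θ * (S2 - (k + 1) / 2 * Real.cos θ) = 0 := by linear_combination s2 / 2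
    have := (mul_eq_zero.1 this).resolve_left hs
    linarith
  rw [h2, t1, t2] at h1
  have h3 : 4 * r ^ 2 - (2 * r * Real.cos θ) ^ 2 = 4 * (r * Real.sin θ) ^ 2 := by
    have := Real.sin_sq_add_cos_sq θ
    linear_combination (-4 * r ^ 2) * this
  rw [h3]
  push_cast
  linear_combination 4 * h1

theorem fh_root (r θ : ℝ) (hr : 0 < r) (hs : Real.sin θ ≠ 0) (n : ℕ) (hn : 1 ≤ n)
    (hnθ : Real.sin (n * θ) = 0) :
    (fhP (r ^ 2) n).eval (2 * r * Real.cos θ)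
      = r ^ 2 * (fhP (r ^ 2) (n - 1)).eval (2 * r * Real.cos θ) := by
  obtain ⟨k, rfl⟩ : ∃ k, n = k + 1 := ⟨n - 1, by omega⟩
  have h1 := fh_eval r θ (k + 1)
  have h2 := fh_eval r θ k
  push_cast at h1 hnθ
  have e1 : ((k : ℝ) + 1 + 1) * θ = (k + 1) * θ + θ := by ring
  have e2 : (k : ℝ) * θ = (k + 1) * θ - θ := by ring
  rw [e1, Real.sin_add, hnθ] at h1
  rw [e2, Real.sin_sub, hnθ] at h2
  have h3 : r * Real.sin θ ≠ 0 := mul_ne_zero hr.ne' hs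
  apply mul_right_cancel₀ h3
  simp only [Nat.add_sub_cancel]
  rw [h1, mul_assoc, h2]
  ring

/-- Rationality of a real number. -/
def FHRat (x : ℝ) : Prop := ∃ q : ℚ, x = q

theorem FHRat.add {x y : ℝ} (hx : FHRat x) (hy : FHRat y) : FHRat (x + y) := by
  obtain ⟨a, rfl⟩ := hx; obtain ⟨b, rfl⟩ := hy; exact ⟨a + b, by push_cast; rfl⟩
theorem FHRat.sub {x y : ℝ} (hx : FHRat x) (hy : FHRat y) : FHRat (x - y) := by
  obtain ⟨a, rfl⟩ := hx; obtain ⟨b, rfl⟩ := hy; exact ⟨a - b, by push_cast; rfl⟩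
theorem FHRat.mul {x y : ℝ} (hx : FHRat x) (hy : FHRat y) : FHRat (x * y) := by
  obtain ⟨a, rfl⟩ := hx; obtain ⟨b, rfl⟩ := hy; exact ⟨a * b, by push_cast; rfl⟩
theorem FHRat.div {x y : ℝ} (hx : FHRat x) (hy : FHRat y) : FHRat (x / y) := by
  obtain ⟨a, rfl⟩ := hx; obtain ⟨b, rfl⟩ := hy; exact ⟨a / b, by push_cast; rfl⟩
theorem FHRat.nat (n : ℕ) : FHRat n := ⟨n, by simp⟩
theorem FHRat.num (n : ℕ) [n.AtLeastTwo] : FHRat (OfNat.ofNat n) := ⟨OfNat.ofNat n, by simp⟩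
theorem FHRat.one : FHRat 1 := ⟨1, by simp⟩

theorem fh_cos_rat (n : ℕ) (hn : 2 ≤ n) (h : FHRat (Real.cos (2 * Real.pi / n))) :
    n = 2 ∨ n = 3 ∨ n = 4 ∨ n = 6 := by
  have hn0 : (n : ℚ) ≠ 0 := by positivity
  have hn2 : (2 : ℚ) ≤ n := by exact_mod_cast hn
  have := niven_angle_div_pi_eq (r := 2 / n) (by
    obtain ⟨q, hq⟩ := h
    refine ⟨q, ?_⟩
    rw [← hq]
    congr 1
    push_cast
    ring) ⟨by positivity, by rw [div_le_one (by positivity)]; exact hn2⟩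
  simp only [Set.mem_insert_iff, Set.mem_singleton_iff] at this
  rcases this with h | h | h | h | h <;> field_simp at h
  · norm_num at h
  all_goals norm_cast at h; omega

/-- arithmetic for the biregular case: `y` and `-y`. -/
theorem fh_arith_even (s t : ℕ) (hs : 2 ≤ s) (ht : 2 ≤ t) (y : ℝ)
    (hy : y ^ 2 < 4 * (s * t))
    (h1 : FHRat ((s * t + 1 - y) * (y + (s + t)) / (4 * (s * t) - y ^ 2)))
    (h2 : FHRat ((s * t + 1 + y) * (-y + (s + t)) / (4 * (s * t) - y ^ 2))) : FHRat y := by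
  have hs' : (2 : ℝ) ≤ s := by exact_mod_cast hs
  have ht' : (2 : ℝ) ≤ t := by exact_mod_cast ht
  set D := 4 * ((s : ℝ) * t) - y ^ 2 with hD
  have hD0 : 0 < D := by linarith
  have hK : 0 < ((s : ℝ) + t) * (s * t + 1) - 4 * (s * t) := by
    nlinarith [mul_nonneg (sub_nonneg.2 hs') (sub_nonneg.2 ht'), sq_nonneg ((s : ℝ) - t)]
  have a1 : FHRat (2 * (((s : ℝ) + t) * (s * t + 1) - 4 * (s * t)) / D) := by
    have := (h1.add h2).sub (FHRat.num 2)
    convert this using 1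
    field_simp
    rw [hD]
    ring
  have rs := FHRat.nat s
  have rt := FHRat.nat t
  have rK : FHRat (2 * (((s : ℝ) + t) * (s * t + 1) - 4 * (s * t))) :=
    (FHRat.num 2).mul (((rs.add rt).mul ((rs.mul rt).add FHRat.one)).sub
      ((FHRat.num 4).mul (rs.mul rt)))
  have rD : FHRat D := by
    have := rK.div a1
    rwa [div_div_cancel₀ (by positivity)] at this
  have hB : 0 < ((s : ℝ) - 1) * (t - 1) := mul_pos (by linarith) (by linarith)
  have rB : FHRat (2 * (((s : ℝ) - 1) * (t - 1))) :=
    (FHRat.num 2).mul ((rs.sub FHRat.one).mul (rt.sub FHRat.one))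
  have := ((h1.sub h2).mul rD).div rB
  convert this using 1
  rw [eq_div_iff (by positivity), ← sub_div, div_mul_cancel₀ _ hD0.ne']
  ring

theorem fh_arith_reg (s : ℕ) (hs : 2 ≤ s) (y : ℝ) (hy : y ^ 2 < 4 * s)
    (h1 : FHRat ((s + 1 - y) * (y + (s + 1)) / (4 * s - y ^ 2))) : FHRat (y ^ 2) := by
  have hs' : (2 : ℝ) ≤ s := by exact_mod_cast hs
  set D := 4 * (s : ℝ) - y ^ 2 with hD
  have hD0 : 0 < D := by linarith
  have hB : 0 < ((s : ℝ) - 1) * (s - 1) := mul_pos (by linarith) (by linarith)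
  have rs := FHRat.nat s
  have a1 : FHRat (((s : ℝ) - 1) * (s - 1) / D) := by
    have := h1.sub FHRat.one
    convert this using 1
    field_simp
    rw [hD]
    ring
  have rD := ((rs.sub FHRat.one).mul (rs.sub FHRat.one)).div a1
  rw [div_div_cancel₀ hB.ne'] at rD
  have := ((FHRat.num 4).mul rs).sub rD
  convert this using 1
  rw [hD]
  ring

/-- The degree minus one function. -/
def fhe {V : Type} [Fintype V] (G : SimpleGraph V) [DecidableRel G.Adj] (u : V) : ℝ :=
  (G.degree u : ℝ) - 1

/-- Distance matrices, modified at the top. -/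
noncomputable def fhB {V : Type} [Fintype V] (G : SimpleGraph V) [DecidableRel G.Adj] (m : ℕ)
    (Q : ℝ) (i : ℕ) : Matrix V V ℝ := Matrix.of fun u v =>
  if i = m + 1 then (if G.dist u v = m - 1 then Q else 0)
  else if G.dist u v = i then (if i = m then fhe G u + 1 else 1) else 0

namespace FHPoly
variable {V : Type} [Fintype V] {G : SimpleGraph V} [DecidableRel G.Adj] {m : ℕ}

theorem sum_zero (_P : FHPoly G m) {u v : V} (h : u = v) (f : ℕ → ℝ) :
    ∑ w ∈ G.neighborFinset u, f (G.dist w v) = (fhe G u + 1) * f 1 := by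
  subst h
  rw [Finset.sum_congr rfl (g := fun _ => f 1), Finset.sum_const, nsmul_eq_mul,
    SimpleGraph.card_neighborFinset_eq_degree, fhe]
  · ring
  · intro w hw
    rw [SimpleGraph.mem_neighborFinset] at hw
    rw [SimpleGraph.dist_eq_one_iff_adj.2 hw.symm]

theorem sum_top (P : FHPoly G m) {u v : V} (h : G.dist u v = m) (f : ℕ → ℝ) :
    ∑ w ∈ G.neighborFinset u, f (G.dist w v) = (fhe G u + 1) * f (m - 1) := by
  rw [Finset.sum_congr rfl (g := fun _ => f (m - 1)), Finset.sum_const, nsmul_eq_mul,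
    SimpleGraph.card_neighborFinset_eq_degree, fhe]
  · ring
  · intro w hw
    rw [SimpleGraph.mem_neighborFinset] at hw
    have := P.step (v := v) hw
    have := P.le w v
    congr 1
    omega

theorem sum_mid (P : FHPoly G m) {u v : V} (h : u ≠ v) (h2 : G.dist u v < m) (f : ℕ → ℝ) :
    ∑ w ∈ G.neighborFinset u, f (G.dist w v) =
      f (G.dist u v - 1) + fhe G u * f (G.dist u v + 1) := by
  classical
  obtain ⟨w0, hw0, hd⟩ := P.closer h
  have hmem : w0 ∈ G.neighborFinset u := by simpa using hw0
  rw [← Finset.add_sum_erase _ _ hmem, Finset.sum_congr rfl (g := fun _ => f (G.dist u v + 1)),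
    Finset.sum_const, nsmul_eq_mul, Finset.card_erase_of_mem hmem,
    SimpleGraph.card_neighborFinset_eq_degree, fhe, Nat.cast_sub]
  · have : G.dist w0 v = G.dist u v - 1 := by omega
    rw [this]
    simp
  · have := P.thick u; omega
  · intro w hw
    simp only [Finset.mem_erase, SimpleGraph.mem_neighborFinset] at hw
    congr 1
    rcases P.step (v := v) hw.2 with h3 | h3
    · exact absurd (P.uniq h2 hw.2 hw0 h3 hd) hw.1
    · exact h3

theorem B_rec [DecidableEq V] (P : FHPoly G m) (Q c : ℝ)
    (he : ∀ u w, G.Adj u w → fhe G w = c - fhe G u) (hQ : ∀ u, (c - fhe G u) * fhe G u = Q)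
    (i : ℕ) (hi : 1 ≤ i) (hi2 : i + 1 ≤ m) :
    G.adjMatrix ℝ * fhB G m Q (i + 1) = fhB G m Q (i + 2)
      + Matrix.diagonal (fhe G) * fhB G m Q i := by
  have hm := P.hm
  ext u v
  rw [SimpleGraph.adjMatrix_mul_apply, Matrix.add_apply, Matrix.diagonal_mul]
  obtain ⟨f, hf⟩ : ∃ f : ℕ → ℝ, f = fun d => if d = i + 1 then
    (if i + 1 = m then c - fhe G u + 1 else 1) else 0 := ⟨_, rfl⟩
  rw [Finset.sum_congr rfl (g := fun w => f (G.dist w v))]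
  swap
  · intro w hw
    rw [SimpleGraph.mem_neighborFinset] at hw
    simp only [hf, fhB, Matrix.of_apply]
    rw [if_neg (by omega), he u w hw]
  have hQu := hQ u
  have hle := P.le u v
  by_cases h0 : u = v
  · rw [P.sum_zero h0 f]
    subst h0
    simp only [hf, fhB, Matrix.of_apply, SimpleGraph.dist_self]
    rw [if_neg (by omega), if_neg (by omega : ¬ i = m + 1), if_neg (by omega : ¬ 0 = m - 1),
      if_neg (by omega : ¬ 0 = i), if_neg (by omega : ¬ 0 = i + 2)]
    simp
  · have hpos := P.conn.pos_dist_of_ne h0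
    by_cases h1 : G.dist u v = m
    · rw [P.sum_top h1 f]
      simp only [hf, fhB, Matrix.of_apply, h1]
      split_ifs <;> first | omega | simp
    · rw [P.sum_mid h0 (by omega) f]
      simp only [hf, fhB, Matrix.of_apply]
      split_ifs <;> first | omega | (simp; done) | (simp; linear_combination hQu)

theorem B_one [DecidableEq V] (P : FHPoly G m) (Q : ℝ) : fhB G m Q 1 = G.adjMatrix ℝ := by
  have hm := P.hm
  ext u v
  simp only [fhB, Matrix.of_apply, SimpleGraph.adjMatrix_apply, SimpleGraph.dist_eq_one_iff_adj]
  rw [if_neg (by omega), if_neg (by omega : ¬ 1 = m)]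

theorem B_rec_one [DecidableEq V] (P : FHPoly G m) (Q : ℝ) :
    G.adjMatrix ℝ * G.adjMatrix ℝ = fhB G m Q 2 + (Matrix.diagonal (fhe G) + 1) := by
  have hm := P.hm
  rw [← P.B_one Q]
  nth_rewrite 1 [P.B_one Q]
  ext u v
  rw [SimpleGraph.adjMatrix_mul_apply, Matrix.add_apply, Matrix.add_apply]
  obtain ⟨f, hf⟩ : ∃ f : ℕ → ℝ, f = fun d => if d = 1 then (1 : ℝ) else 0 := ⟨_, rfl⟩
  rw [Finset.sum_congr rfl (g := fun w => f (G.dist w v))]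
  swap
  · intro w hw
    simp only [hf, fhB, Matrix.of_apply]
    rw [if_neg (by omega), if_neg (by omega : ¬ 1 = m)]
  have hle := P.le u v
  by_cases h0 : u = v
  · rw [P.sum_zero h0 f]
    subst h0
    simp only [hf, fhB, Matrix.of_apply, SimpleGraph.dist_self]
    rw [if_neg (by omega : ¬ 2 = m + 1)]
    simp
  · have hpos := P.conn.pos_dist_of_ne h0
    rw [Matrix.diagonal_apply_ne _ h0, Matrix.one_apply_ne h0]
    by_cases h1 : G.dist u v = m
    · rw [P.sum_top h1 f]
      simp only [hf, fhB, Matrix.of_apply, h1]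
      split_ifs <;> first | omega | simp
    · rw [P.sum_mid h0 (by omega) f]
      simp only [hf, fhB, Matrix.of_apply]
      split_ifs <;> first | omega | simp

theorem A_diag [DecidableEq V] (c : ℝ) (he : ∀ u w, G.Adj u w → fhe G w = c - fhe G u) :
    G.adjMatrix ℝ * Matrix.diagonal (fhe G)
      = (c • 1 - Matrix.diagonal (fhe G)) * G.adjMatrix ℝ := by
  ext u v
  rw [Matrix.mul_diagonal, sub_mul, Matrix.sub_apply, Matrix.diagonal_mul, smul_mul_assoc, one_mul,
    Matrix.smul_apply]
  simp only [SimpleGraph.adjMatrix_apply, smul_eq_mul]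
  by_cases h : G.Adj u v
  · simp [h, he u v h]
  · simp [h]

theorem diag_mul [DecidableEq V] (Q c : ℝ) (hQ : ∀ u, (c - fhe G u) * fhe G u = Q) :
    (c • 1 - Matrix.diagonal (fhe G)) * Matrix.diagonal (fhe G) = Q • (1 : Matrix V V ℝ) := by
  ext u v
  rw [Matrix.mul_diagonal]
  by_cases h : u = v
  · subst h; simp [hQ u]
  · simp [h]

theorem X_rec [DecidableEq V] (P : FHPoly G m) (Q c : ℝ)
    (he : ∀ u w, G.Adj u w → fhe G w = c - fhe G u) (hQ : ∀ u, (c - fhe G u) * fhe G u = Q)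
    (i : ℕ) (hi : 1 ≤ i) (hi2 : i + 3 ≤ m) :
    (G.adjMatrix ℝ * G.adjMatrix ℝ - c • 1) * fhB G m Q (i + 2)
      = fhB G m Q (i + 4) + Q • fhB G m Q i := by
  have r1 := P.B_rec Q c he hQ (i + 1) (by omega) (by omega)
  have r2 := P.B_rec Q c he hQ (i + 2) (by omega) (by omega)
  have r3 := P.B_rec Q c he hQ i (by omega) (by omega)
  have a := A_diag c he
  have d := diag_mul (G := G) Q c hQ
  set A := G.adjMatrix ℝ
  set E := Matrix.diagonal (fhe G)
  rw [sub_mul, mul_assoc, r1, mul_add, r2, ← mul_assoc A E, a, mul_assoc _ A, r3, mul_add,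
    ← mul_assoc _ E (fhB G m Q i), d]
  simp only [sub_mul, smul_mul_assoc, one_mul]
  abel

theorem X_rec_one [DecidableEq V] (P : FHPoly G m) (Q c : ℝ)
    (he : ∀ u w, G.Adj u w → fhe G w = c - fhe G u) (hQ : ∀ u, (c - fhe G u) * fhe G u = Q) :
    (G.adjMatrix ℝ * G.adjMatrix ℝ - c • 1) * fhB G m Q 1
      = fhB G m Q 3 + fhB G m Q 1 := by
  have hm := P.hm
  have r1 := P.B_rec_one Q
  have r2 := P.B_rec Q c he hQ 1 (by omega) (by omega)
  have a := A_diag c he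
  have b := P.B_one Q
  rw [b] at r2 ⊢
  set A := G.adjMatrix ℝ
  set E := Matrix.diagonal (fhe G)
  rw [sub_mul, mul_assoc, r1, mul_add, r2, mul_add, a, mul_one]
  simp only [sub_mul, smul_mul_assoc, one_mul]
  abel

theorem trace_A_sq [DecidableEq V] (P : FHPoly G m) :
    ∃ k : ℕ, 0 < k ∧ (G.adjMatrix ℝ * G.adjMatrix ℝ).trace = k := by
  refine ⟨∑ u, G.degree u, ?_, ?_⟩
  · obtain ⟨u, -⟩ := P.ex
    refine Finset.sum_pos (fun v _ => ?_) ⟨u, Finset.mem_univ u⟩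
    have := P.thick v
    omega
  · rw [Matrix.trace]
    push_cast
    refine Finset.sum_congr rfl fun u _ => ?_
    rw [Matrix.diag_apply, SimpleGraph.adjMatrix_mul_self_apply_self]

theorem trace_A_B [DecidableEq V] (P : FHPoly G m) (Q : ℝ) (i : ℕ) (hi : 2 ≤ i) (him : i < m) :
    (G.adjMatrix ℝ * fhB G m Q i).trace = 0 := by
  rw [Matrix.trace]
  refine Finset.sum_eq_zero fun u _ => ?_
  rw [Matrix.diag_apply, SimpleGraph.adjMatrix_mul_apply]
  refine Finset.sum_eq_zero fun w hw => ?_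
  rw [SimpleGraph.mem_neighborFinset] at hw
  have := SimpleGraph.dist_eq_one_iff_adj.2 hw.symm
  simp only [fhB, Matrix.of_apply, this]
  rw [if_neg (by omega), if_neg (by omega)]

theorem trace_B (_P : FHPoly G m) (Q : ℝ) (i : ℕ) (hi : 1 ≤ i) (him : i ≤ m) :
    (fhB G m Q i).trace = 0 := by
  rw [Matrix.trace]
  refine Finset.sum_eq_zero fun u _ => ?_
  rw [Matrix.diag_apply]
  simp only [fhB, Matrix.of_apply, SimpleGraph.dist_self]
  rw [if_neg (by omega), if_neg (by omega)]

end FHPoly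

/-- Common consequence of the trace computation. -/
theorem fh_rat {V : Type} [Fintype V] [DecidableEq V] (X L : Matrix V V ℝ)
    (C : ℕ → Matrix V V ℝ) (n : ℕ) (Q c t : ℕ) (hQ : 0 < Q) (ht' : 0 < t)
    (h0 : X * C 0 = C 1 + C 0)
    (hi : ∀ i, i + 1 < n → X * C (i + 1) = C (i + 2) + (Q : ℝ) • C i)
    (hC : C n = (Q : ℝ) • C (n - 1))
    (hL : L * C 0 = X + (c : ℝ) • 1) (hLX : Commute X L)
    (ht0 : (L * C 0).trace = t) (ht : ∀ i, 1 ≤ i → i < n → (L * C i).trace = 0)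
    (k : ℕ) (hk : 1 ≤ k) (hkn : k < n) (y : ℝ)
    (hy : y = 2 * Real.sqrt Q * Real.cos (k * Real.pi / n)) :
    y ^ 2 < 4 * Q ∧ FHRat ((Q + 1 - y) * (y + c) / (4 * Q - y ^ 2)) := by
  set r := Real.sqrt Q with hr
  have hQ' : (0 : ℝ) < Q := by exact_mod_cast hQ
  have hr0 : 0 < r := Real.sqrt_pos.2 hQ'
  have hr2 : r ^ 2 = Q := Real.sq_sqrt hQ'.le
  have hn0 : (0 : ℝ) < n := by exact_mod_cast (by omega : 0 < n)
  have hk0 : (0 : ℝ) < k := by exact_mod_cast hk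
  have hkn' : (k : ℝ) < n := by exact_mod_cast hkn
  set θ := k * Real.pi / n with hθ
  have hs : 0 < Real.sin θ := by
    apply Real.sin_pos_of_pos_of_lt_pi
    · have := Real.pi_pos
      positivity
    · rw [hθ, div_lt_iff₀ hn0]
      nlinarith [Real.pi_pos]
  have hnθ : Real.sin (n * θ) = 0 := by
    have : n * θ = k * Real.pi := by rw [hθ]; field_simp
    rw [this, Real.sin_nat_mul_pi]
  have hylt : y ^ 2 < 4 * Q := by
    have := Real.sin_sq_add_cos_sq θ
    rw [hy, ← hr2]
    have : 0 < r ^ 2 * Real.sin θ ^ 2 := by positivity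
    nlinarith
  refine ⟨hylt, ?_⟩
  have hroot := fh_root r θ hr0 hs.ne' n (by omega) hnθ
  have hnorm := fh_norm r θ hr0 hs.ne' n (by omega) hnθ
  rw [← hy, hr2] at hroot hnorm
  have htne : (t : ℝ) ≠ 0 := by exact_mod_cast ht'.ne'
  obtain ⟨j, hj⟩ := fh_trace X L C n (by omega) Q c t y hQ'.ne' h0 hi hC hL hLX ht0 ht htne hroot
  set N := ∑ i ∈ range n, (fhP (Q : ℝ) i).eval y ^ 2 / (Q : ℝ) ^ i
  have hD : 0 < 4 * (Q : ℝ) - y ^ 2 := by linarith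
  have hj0 : (j : ℝ) ≠ 0 := by
    intro h
    rw [h, zero_mul] at hj
    exact htne hj
  have : (Q + 1 - y) * (y + c) / (4 * Q - y ^ 2) = (t : ℝ) / (2 * n * j) := by
    rw [div_eq_div_iff hD.ne' (by positivity), hj]
    linear_combination (-(j : ℝ) * (y + c)) * hnorm
  rw [this]
  exact (FHRat.nat t).div (((FHRat.num 2).mul (FHRat.nat n)).mul (FHRat.nat j))

theorem fh_even {V : Type} [Fintype V] (G : SimpleGraph V) [DecidableRel G.Adj] (n : ℕ)
    (hn : 2 ≤ n) (P : FHPoly G (2 * n)) : n = 2 ∨ n = 3 ∨ n = 4 := by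
  classical
  obtain ⟨s, t, hs, ht, hst⟩ := P.exists_params
  have he : ∀ u w, G.Adj u w → fhe G w = (s + t : ℕ) - fhe G u := by
    intro u w h
    rcases hst u w h with ⟨h1, h2⟩ | ⟨h1, h2⟩ <;> simp [fhe, h1, h2]
  have hQ : ∀ u, ((s + t : ℕ) - fhe G u) * fhe G u = (s * t : ℕ) := by
    intro u
    obtain ⟨w, h⟩ : ∃ w, G.Adj u w := by
      have h0 := P.thick u
      obtain ⟨b0, hb0⟩ : (G.neighborFinset u).Nonempty := by
        rw [← Finset.card_pos, SimpleGraph.card_neighborFinset_eq_degree]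
        omega
      rw [SimpleGraph.mem_neighborFinset] at hb0
      exact ⟨b0, hb0⟩
    rcases hst u w h with ⟨h1, h2⟩ | ⟨h1, h2⟩ <;> simp [fhe, h1] <;> ring
  obtain ⟨τ, hτ, htr⟩ := P.trace_A_sq
  have hst0 : 0 < s * t := by positivity
  have key := fh_rat (G.adjMatrix ℝ * G.adjMatrix ℝ - ((s + t : ℕ) : ℝ) • 1) (G.adjMatrix ℝ)
    (fun i => fhB G (2 * n) ((s * t : ℕ) : ℝ) (2 * i + 1)) n (s * t) (s + t) τ hst0 hτ
    (P.X_rec_one _ _ he hQ)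
    (fun i hi => P.X_rec _ _ he hQ (2 * i + 1) (by omega) (by omega))
    (by
      ext u v
      simp only [fhB, Matrix.of_apply, Matrix.smul_apply]
      rw [if_pos trivial, if_neg (by omega : ¬ 2 * (n - 1) + 1 = 2 * n + 1),
        if_neg (by omega : ¬ 2 * (n - 1) + 1 = 2 * n)]
      have : 2 * (n - 1) + 1 = 2 * n - 1 := by omega
      rw [this]
      simp)
    (by simp [P.B_one])
    (by
      apply Commute.sub_left
      · exact (Commute.refl _).mul_left (Commute.refl _)
      · exact (Commute.one_left _).smul_left _)
    (by simp only [mul_zero, zero_add]; rw [P.B_one, htr])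
    (fun i hi hin => P.trace_A_B _ _ (by omega) (by omega))
  have hrat : ∀ k : ℕ, 1 ≤ k → k < n →
      FHRat (2 * Real.sqrt ((s * t : ℕ) : ℝ) * Real.cos (k * Real.pi / n)) := by
    intro k hk hkn
    obtain ⟨k1, k2⟩ := key k hk hkn _ rfl
    obtain ⟨-, k3⟩ := key (n - k) (by omega) (by omega)
      (-(2 * Real.sqrt ((s * t : ℕ) : ℝ) * Real.cos (k * Real.pi / n))) (by
        rw [Nat.cast_sub hkn.le]
        have hn0 : (n : ℝ) ≠ 0 := by exact_mod_cast (by omega : n ≠ 0)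
        have : ((n : ℝ) - k) * Real.pi / n = Real.pi - k * Real.pi / n := by field_simp
        rw [this, Real.cos_pi_sub]
        ring)
    set y := 2 * Real.sqrt ((s * t : ℕ) : ℝ) * Real.cos (k * Real.pi / n)
    rw [neg_sq, sub_neg_eq_add] at k3
    push_cast at k1 k2 k3
    exact fh_arith_even s t hs ht y k1 k2 k3
  have hpos : (0 : ℝ) < (s * t : ℕ) := by exact_mod_cast hst0
  have hsq : Real.sqrt ((s * t : ℕ) : ℝ) ^ 2 = (s * t : ℕ) := Real.sq_sqrt hpos.le
  have hr1 := hrat 1 le_rfl (by omega)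
  have hc : FHRat (Real.cos (2 * Real.pi / n)) := by
    have := (((hr1.mul hr1).div ((FHRat.num 2).mul (FHRat.nat (s * t)))).sub FHRat.one)
    convert this using 1
    have e : 2 * Real.pi / n = 2 * ((1 : ℕ) * Real.pi / n) := by push_cast; ring
    rw [e, Real.cos_two_mul]
    set r := Real.sqrt ((s * t : ℕ) : ℝ)
    rw [← hsq]
    have : r ≠ 0 := (Real.sqrt_pos.2 hpos).ne'
    field_simp
  rcases fh_cos_rat n hn hc with h | h | h | h
  · omega
  · omega
  · omega
  · exfalso
    subst h
    have hr2 := hrat 2 (by omega) (by omega)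
    have e1 : ((1 : ℕ) : ℝ) * Real.pi / (6 : ℕ) = Real.pi / 6 := by push_cast; ring
    have e2 : ((2 : ℕ) : ℝ) * Real.pi / (6 : ℕ) = Real.pi / 3 := by push_cast; ring
    rw [e1, Real.cos_pi_div_six] at hr1
    rw [e2, Real.cos_pi_div_three] at hr2
    have := hr1.div hr2
    set r := Real.sqrt ((s * t : ℕ) : ℝ)
    have hr : r ≠ 0 := (Real.sqrt_pos.2 hpos).ne'
    have e3 : 2 * r * (Real.sqrt 3 / 2) / (2 * r * (1 / 2)) = Real.sqrt 3 := by field_simp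
    rw [e3] at this
    obtain ⟨q, hq⟩ := this
    have hirr : Irrational (Real.sqrt 3) := by
      have := Nat.Prime.irrational_sqrt Nat.prime_three
      exact_mod_cast this
    exact hirr ⟨q, hq.symm⟩

theorem fh_reg {V : Type} [Fintype V] (G : SimpleGraph V) [DecidableRel G.Adj] (m : ℕ)
    (P : FHPoly G m) (s : ℕ) (hs : 2 ≤ s) (hdeg : ∀ a, G.degree a = s + 1) :
    m = 2 ∨ m = 3 ∨ m = 4 ∨ m = 6 := by
  classical
  have hm := P.hm
  have he' : ∀ u, fhe G u = s := by intro u; simp [fhe, hdeg]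
  have he : ∀ u w, G.Adj u w → fhe G w = (s + s : ℝ) - fhe G u := by
    intro u w _
    rw [he', he']; ring
  have hQ : ∀ u, ((s + s : ℝ) - fhe G u) * fhe G u = (s : ℝ) * s := by
    intro u
    rw [he']; ring
  have hE : Matrix.diagonal (fhe G) = (s : ℝ) • (1 : Matrix V V ℝ) := by
    rw [Matrix.smul_one_eq_diagonal]
    congr 1
    ext u
    rw [he']
  have r1 := P.B_rec_one ((s : ℝ) * s)
  have rr := P.B_rec ((s : ℝ) * s) _ he hQ
  have b1 := P.B_one ((s : ℝ) * s)
  rw [hE] at r1 rr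
  set A := G.adjMatrix ℝ with hA
  set B := fhB G m ((s : ℝ) * s) with hB
  have htr0 : A.trace = 0 := by rw [hA]; exact SimpleGraph.trace_adjMatrix ℝ G
  let C : ℕ → Matrix V V ℝ := fun i => match i with
    | 0 => A + ((s + 1 : ℕ) : ℝ) • 1
    | (i + 1) => B (i + 2) + (s : ℝ) • B (i + 1)
  have c0 : C 0 = A + ((s + 1 : ℕ) : ℝ) • 1 := rfl
  have cs : ∀ i, C (i + 1) = B (i + 2) + (s : ℝ) • B (i + 1) := fun i => rfl
  have hcard : 0 < Fintype.card V := by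
    obtain ⟨u, -⟩ := P.ex
    exact Fintype.card_pos_iff.2 ⟨u⟩
  have key := fh_rat A 1 C m s (s + 1) ((s + 1) * Fintype.card V) (by omega) (by positivity)
    (by
      have c1 : C 1 = B 2 + (s : ℝ) • B 1 := rfl
      rw [c0, c1, b1, mul_add, r1, mul_smul_comm, mul_one]
      push_cast
      module)
    (by
      intro i hi
      rcases i with _ | i
      · have c1 : C (0 + 1) = B 2 + (s : ℝ) • B 1 := rfl
        have c2 : C (0 + 2) = B 3 + (s : ℝ) • B 2 := rfl
        rw [c0, c1, c2, mul_add, mul_smul_comm, rr 1 le_rfl (by omega), b1, r1, smul_mul_assoc, one_mul]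
        push_cast
        module
      · rw [cs, cs, cs, mul_add, mul_smul_comm, rr (i + 2) (by omega) (by omega), rr (i + 1) (by omega) (by omega)]
        simp only [smul_mul_assoc, one_mul]
        module)
    (by
      obtain ⟨k, rfl⟩ : ∃ k, m = k + 2 := ⟨m - 2, by omega⟩
      have e1 : B (k + 1 + 2) = ((s : ℝ) * s) • B (k + 1) := by
        ext u v
        simp only [hB, fhB, Matrix.of_apply, Matrix.smul_apply]
        rw [if_pos trivial, if_neg (by omega : ¬ k + 1 = k + 2 + 1),
          if_neg (by omega : ¬ k + 1 = k + 2)]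
        simp
      simp only [Nat.add_succ_sub_one]
      rw [cs, cs, e1]
      module)
    (by rw [c0, one_mul])
    (Commute.one_right _)
    (by
      rw [c0, one_mul, Matrix.trace_add, htr0, Matrix.trace_smul, Matrix.trace_one]
      push_cast
      simp)
    (by
      intro i hi him
      obtain ⟨j, rfl⟩ : ∃ j, i = j + 1 := ⟨i - 1, by omega⟩
      rw [cs, one_mul, Matrix.trace_add, Matrix.trace_smul, P.trace_B _ _ (by omega) (by omega),
        P.trace_B _ _ (by omega) (by omega)]
      simp)
    1 le_rfl (by omega) _ rfl
  obtain ⟨k1, k2⟩ := key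
  push_cast at k1 k2
  have k3 := fh_arith_reg s hs _ k1 k2
  apply fh_cos_rat m hm
  have hpos : (0 : ℝ) < s := by exact_mod_cast (by omega : 0 < s)
  have hsq : Real.sqrt (s : ℝ) ^ 2 = s := Real.sq_sqrt hpos.le
  have := ((k3.div ((FHRat.num 2).mul (FHRat.nat s))).sub FHRat.one)
  convert this using 1
  have e : 2 * Real.pi / m = 2 * (1 * Real.pi / m) := by ring
  rw [e, Real.cos_two_mul]
  set r := Real.sqrt (s : ℝ)
  rw [← hsq]
  have : r ≠ 0 := (Real.sqrt_pos.2 hpos).ne'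
  field_simp

/-- **Feit–Higman theorem.** A finite, thick generalised `m`-gon (a finite connected
bipartite simple graph of diameter `m` and girth `2m`, in which every vertex has degree
at least 3) exists only for `m ∈ {2, 3, 4, 6, 8}`. -/
theorem feit_higman {V : Type} [Fintype V] (G : SimpleGraph V) [DecidableRel G.Adj]
    (hconn : G.Connected) (hbip : G.Colorable 2)
    (hthick : ∀ v : V, 3 ≤ G.degree v)
    (m : ℕ) (hm : 2 ≤ m) (hdiam : G.diam = m) (hgirth : G.girth = 2 * m) :
    m ∈ ({2, 3, 4, 6, 8} : Set ℕ) := by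
  haveI := hconn.nonempty
  have P : FHPoly G m :=
    { conn := hconn
      hm := hm
      thick := hthick
      step := fun h => fh_dist_step G hconn hbip h
      closer := fun h => fh_exists_closer G hconn h
      uniq := fun hd h1 h2 h3 h4 => fh_closer_unique G hconn hgirth hd h1 h2 h3 h4
      le := fun u v => hdiam ▸ SimpleGraph.dist_le_diam
        (SimpleGraph.ediam_ne_top_of_diam_ne_zero (by omega))
      ex := hdiam ▸ SimpleGraph.exists_dist_eq_diam }
  simp only [Set.mem_insert_iff, Set.mem_singleton_iff]
  rcases Nat.even_or_odd m with h | h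
  · obtain ⟨n, rfl⟩ := h.exists_two_nsmul
    rw [smul_eq_mul] at *
    by_cases hn : 2 ≤ n
    · rcases fh_even G n hn P with h | h | h <;> omega
    · omega
  · obtain ⟨s, hs, hdeg⟩ := P.odd_regular h
    rcases fh_reg G m P s hs hdeg with h | h | h | h <;> omega
end

section
/- Let Γ be a finitely generated group and suppose there exists a field F, a natural number n, and an injective group homomorphism Γ → GL(n, F). Then Γ is residually finite: for every γ ∈ Γ with γ ≠ 1 there exists a finite group Q and a group homomorphism φ : Γ → Q with φ(γ) ≠ 1. -/
theorem int_isJacobsonRing : IsJacobsonRing ℤ := by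
  rw [isJacobsonRing_iff_prime_eq]
  intro P hP
  by_cases h : P = ⊥
  · subst h
    rw [eq_bot_iff]
    intro x hx
    have h1 := Ideal.mem_jacobson_bot.mp hx x
    rw [Int.isUnit_iff] at h1
    rw [Ideal.mem_bot]
    rcases h1 with h1 | h1
    · nlinarith
    · nlinarith [mul_self_nonneg x]
  · have : P.IsMaximal := Ideal.IsPrime.isMaximal hP h
    exact Ideal.jacobson_eq_self_of_isMaximal

theorem finite_of_field_finiteType_int (K : Type*) [Field K] [inst : Algebra ℤ K] [Algebra.FiniteType ℤ K] :
    Finite K := by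
  obtain rfl : inst = Ring.toIntAlgebra K := Subsingleton.elim _ _
  have := int_isJacobsonRing
  have hfin : Module.Finite ℤ K := finite_of_finite_type_of_isJacobsonRing ℤ K
  by_cases hinj : Function.Injective (algebraMap ℤ K)
  · exact absurd (isField_of_isIntegral_of_isField hinj (Field.toIsField K)) Int.not_isField
  · rw [injective_iff_map_eq_zero] at hinj
    push Not at hinj
    obtain ⟨p, hp, hp0⟩ := hinj
    refine Module.finite_of_fg_torsion K ?_
    intro x
    refine ⟨⟨p, mem_nonZeroDivisors_of_ne_zero hp0⟩, ?_⟩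
    change p • x = 0
    rw [Algebra.smul_def, hp, zero_mul]

/-- **Mal'cev's theorem.** Every finitely generated linear group is residually finite:
if a finitely generated group `Γ` embeds in `GL(n, F)` for some field `F`, then for every
`γ ≠ 1` in `Γ` there is a homomorphism `φ` from `Γ` to a finite group `Q` with `φ γ ≠ 1`. -/
theorem malcev_linear_residually_finite (Γ : Type) [Group Γ] (hfg : Group.FG Γ)
    (F : Type) [Field F] (n : ℕ)
    (ρ : Γ →* Matrix.GeneralLinearGroup (Fin n) F) (hρ : Function.Injective ρ) :
    ∀ γ : Γ, γ ≠ 1 →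
      ∃ (Q : Type) (_ : Group Q) (_ : Finite Q) (φ : Γ →* Q), φ γ ≠ 1 := by
  intro γ hγ
  obtain ⟨S, hS⟩ := hfg.out
  let E : Set F := ⋃ g ∈ (S : Set Γ), ⋃ i : Fin n, ⋃ j : Fin n,
    {(ρ g).1 i j, (ρ g)⁻¹.1 i j}
  have hE : E.Finite := by
    refine S.finite_toSet.biUnion fun g _ => ?_
    exact Set.finite_iUnion fun i => Set.finite_iUnion fun j => Set.toFinite _
  let A : Subalgebra ℤ F := Algebra.adjoin ℤ E
  have hEA : E ⊆ A := Algebra.subset_adjoin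
  have hft : Algebra.FiniteType ℤ A := by
    rw [← Subalgebra.fg_iff_finiteType]
    exact Subalgebra.fg_def.mpr ⟨E, hE, rfl⟩
  have hJZ := int_isJacobsonRing
  have hJ : IsJacobsonRing A := isJacobsonRing_of_finiteType (A := ℤ)
  let ι : A →+* F := A.val.toRingHom
  have hι : Function.Injective ι := Subtype.val_injective
  let M : Matrix.GeneralLinearGroup (Fin n) A →* Matrix.GeneralLinearGroup (Fin n) F :=
    Matrix.GeneralLinearGroup.map ι
  have hM : Function.Injective M := by
    intro a b hab
    ext i j
    have := congrArg (fun u : Matrix.GeneralLinearGroup (Fin n) F => u.1 i j) hab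
    exact this
  have hrange : ∀ g, ρ g ∈ M.range := by
    have : Subgroup.closure (S : Set Γ) ≤ M.range.comap ρ := by
      rw [Subgroup.closure_le]
      intro g hg
      have h1 : ∀ i j, (ρ g).1 i j ∈ A := fun i j => hEA (by
        simp only [E, Set.mem_iUnion]
        exact ⟨g, hg, i, j, Or.inl rfl⟩)
      have h2 : ∀ i j, (ρ g)⁻¹.1 i j ∈ A := fun i j => hEA (by
        simp only [E, Set.mem_iUnion]
        exact ⟨g, hg, i, j, Or.inr rfl⟩)
      let B : Matrix (Fin n) (Fin n) A := Matrix.of fun i j => ⟨_, h1 i j⟩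
      let C : Matrix (Fin n) (Fin n) A := Matrix.of fun i j => ⟨_, h2 i j⟩
      have hmap : Function.Injective (ι.mapMatrix : Matrix (Fin n) (Fin n) A →+* _) :=
        Matrix.map_injective hι
      have hB : ι.mapMatrix B = (ρ g).1 := rfl
      have hC : ι.mapMatrix C = (ρ g)⁻¹.1 := rfl
      have hBC : B * C = 1 := by
        apply hmap
        rw [map_mul, map_one, hB, hC]
        exact (ρ g).mul_inv
      have hCB : C * B = 1 := by
        apply hmap
        rw [map_mul, map_one, hB, hC]
        exact (ρ g).inv_mul
      refine ⟨⟨B, C, hBC, hCB⟩, ?_⟩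
      exact Units.ext rfl
    intro g
    exact this (hS ▸ Subgroup.mem_top g)
  let σ : Γ →* Matrix.GeneralLinearGroup (Fin n) A :=
    (MonoidHom.ofInjective hM).symm.toMonoidHom.comp (ρ.codRestrict M.range hrange)
  have hσ : ∀ g, M (σ g) = ρ g := fun g => by
    have := (MonoidHom.ofInjective hM).apply_symm_apply (ρ.codRestrict M.range hrange g)
    exact congrArg Subtype.val this
  have hσγ : σ γ ≠ 1 := by
    intro h
    apply hγ
    apply hρ
    rw [← hσ, h, map_one, map_one]
  obtain ⟨i, j, hij⟩ : ∃ i j, (σ γ).1 i j - (1 : Matrix (Fin n) (Fin n) A) i j ≠ 0 := by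
    by_contra hcon
    push Not at hcon
    exact hσγ (Units.ext (Matrix.ext fun i j => sub_eq_zero.mp (hcon i j)))
  obtain ⟨m, hm, ham⟩ : ∃ m : Ideal A, m.IsMaximal ∧
      (σ γ).1 i j - (1 : Matrix (Fin n) (Fin n) A) i j ∉ m := by
    by_contra hcon
    push Not at hcon
    apply hij
    have h0 : (⊥ : Ideal A).jacobson = ⊥ :=
      isJacobsonRing_iff_prime_eq.mp hJ ⊥ Ideal.isPrime_bot
    rw [← Ideal.mem_bot, ← h0, Ideal.jacobson, Ideal.mem_sInf]
    intro I hI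
    exact hcon I hI.2
  let _ := Ideal.Quotient.field m
  have hftm : Algebra.FiniteType ℤ (A ⧸ m) :=
    Algebra.FiniteType.of_surjective (Ideal.Quotient.mkₐ ℤ m) (Ideal.Quotient.mkₐ_surjective ℤ m)
  have hfinm : Finite (A ⧸ m) := finite_of_field_finiteType_int (A ⧸ m)
  refine ⟨Matrix.GeneralLinearGroup (Fin n) (A ⧸ m), inferInstance, ?_,
    (Matrix.GeneralLinearGroup.map (Ideal.Quotient.mk m)).comp σ, ?_⟩
  · have : Finite (Matrix (Fin n) (Fin n) (A ⧸ m)) := inferInstanceAs (Finite (Fin n → Fin n → A ⧸ m))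
    exact inferInstanceAs (Finite (Matrix (Fin n) (Fin n) (A ⧸ m))ˣ)
  · intro h
    apply ham
    rw [← Ideal.Quotient.eq_zero_iff_mem, map_sub, sub_eq_zero]
    have h1 := congrArg (fun u : Matrix.GeneralLinearGroup (Fin n) (A ⧸ m) => u.1 i j) h
    have h2 : Ideal.Quotient.mk m ((1 : Matrix (Fin n) (Fin n) A) i j) =
        (1 : Matrix (Fin n) (Fin n) (A ⧸ m)) i j := by
      rw [Matrix.one_apply, Matrix.one_apply]; split_ifs <;> simp
    rw [h2]
    exact h1
end
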